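/- Assume 0 < a² + q² < m². For each sign ε ∈ {+1, −1} there exists exactly one real number r > r₊ satisfying the photon-circle equation r² − 3mr + 2a² + 2q² + 2εa√(r² − 2mr + a² + q²) = 0. (The solution for ε = +1 is the co-rotating photon circle radius r₊^ph and the solution for ε = −1 is the counter-rotating photon circle radius r₋^ph.) -/

import Mathlib

noncomputable section

open Real

/-- Δ = r² − 2mr + a² + q² -/
def Delta (m a q r : ℝ) : ℝ := r ^ 2 - 2 * m * r + a ^ 2 + q ^ 2

/-- r₊ = m + √(m² − a² − q²) -/
def rPlus (m a q : ℝ) : ℝ := m + Real.sqrt (m ^ 2 - a ^ 2 - q ^ 2)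

/-!
For any coefficient `c`, the equation `r² - 3mr + 2a² + 2q² + c √Δ = 0` on `r > r₊` says that the
quotient `(r² - 3mr + 2a² + 2q²) / √Δ` takes the value `-c`. This quotient has derivative
`((r - m)³ + m (m² - a² - q²)) / (Δ √Δ) > 0`; it tends to `-∞` at the horizon, where its numerator
is negative and `√Δ` vanishes, and to `+∞` at infinity. Hence it is a bijection from `(r₊, ∞)`
onto `ℝ`, which treats both signs `ε` at once.
-/

section

open Filter Set Topology

variable {m a q r : ℝ}

/-- The quotient of the two terms of the photon-circle equation: with coefficient `c` in front of
`√Δ`, the equation asks that this quotient be equal to `-c`. It is meant for `r > r₊`; where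
`Δ ≤ 0` it takes the junk value `0`. -/
def photonQuotient (m a q r : ℝ) : ℝ :=
  (r ^ 2 - 3 * m * r + 2 * a ^ 2 + 2 * q ^ 2) / √(Delta m a q r)

lemma Delta_eq_sub_sq_sub (m a q r : ℝ) :
    Delta m a q r = (r - m) ^ 2 - (m ^ 2 - a ^ 2 - q ^ 2) := by
  unfold Delta
  ring

lemma le_rPlus (m a q : ℝ) : m ≤ rPlus m a q :=
  le_add_of_nonneg_right (Real.sqrt_nonneg _)

lemma Delta_pos (hr : rPlus m a q < r) : 0 < Delta m a q r := by
  rw [Delta_eq_sub_sq_sub, sub_pos]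
  exact Real.lt_sq_of_sqrt_lt (lt_sub_iff_add_lt'.mpr hr)

lemma Delta_rPlus (h : a ^ 2 + q ^ 2 ≤ m ^ 2) : Delta m a q (rPlus m a q) = 0 := by
  rw [Delta_eq_sub_sq_sub, rPlus, add_sub_cancel_left, Real.sq_sqrt (by linarith), sub_self]

lemma sqrt_Delta_le_sub (h : a ^ 2 + q ^ 2 ≤ m ^ 2) (hr : m ≤ r) : √(Delta m a q r) ≤ r - m := by
  refine Real.sqrt_le_iff.mpr ⟨sub_nonneg.mpr hr, ?_⟩
  rw [Delta_eq_sub_sq_sub]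
  linarith

lemma hasDerivAt_Delta (m a q r : ℝ) : HasDerivAt (Delta m a q) (2 * (r - m)) r := by
  have h := (((hasDerivAt_pow 2 r).sub ((hasDerivAt_id r).const_mul (2 * m))).add_const
    (a ^ 2)).add_const (q ^ 2)
  exact h.congr_deriv (by norm_num; ring)

lemma photonQuotient_eq_neg_iff (hr : 0 < Delta m a q r) (c : ℝ) :
    photonQuotient m a q r = -c ↔
      r ^ 2 - 3 * m * r + 2 * a ^ 2 + 2 * q ^ 2 + c * √(Delta m a q r) = 0 := by
  rw [photonQuotient, div_eq_iff (Real.sqrt_pos.mpr hr).ne', neg_mul, ← add_eq_zero_iff_eq_neg]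

lemma hasDerivAt_photonQuotient (hr : 0 < Delta m a q r) :
    HasDerivAt (photonQuotient m a q)
      (((r - m) ^ 3 + m * (m ^ 2 - a ^ 2 - q ^ 2)) / (Delta m a q r * √(Delta m a q r))) r := by
  have hsqrt : √(Delta m a q r) ≠ 0 := (Real.sqrt_pos.mpr hr).ne'
  have hnum : HasDerivAt (fun x ↦ x ^ 2 - 3 * m * x + 2 * a ^ 2 + 2 * q ^ 2)
      (2 * r - 3 * m) r := by
    have h := (((hasDerivAt_pow 2 r).sub ((hasDerivAt_id r).const_mul (3 * m))).add_const
      (2 * a ^ 2)).add_const (2 * q ^ 2)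
    exact h.congr_deriv (by norm_num)
  refine (hnum.div ((hasDerivAt_Delta m a q r).sqrt hr.ne') hsqrt).congr_deriv ?_
  field_simp
  rw [Real.sq_sqrt hr.le, Delta]
  ring

lemma continuousOn_photonQuotient (m a q : ℝ) :
    ContinuousOn (photonQuotient m a q) (Ioi (rPlus m a q)) := fun _ hr ↦
  (hasDerivAt_photonQuotient (Delta_pos hr)).continuousAt.continuousWithinAt

lemma strictMonoOn_photonQuotient (hm : 0 ≤ m) (h : a ^ 2 + q ^ 2 ≤ m ^ 2) :
    StrictMonoOn (photonQuotient m a q) (Ioi (rPlus m a q)) := by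
  refine strictMonoOn_of_deriv_pos (convex_Ioi _) (continuousOn_photonQuotient m a q) ?_
  rw [interior_Ioi]
  intro r hr
  have hΔ : 0 < Delta m a q r := Delta_pos hr
  have hrm : 0 < r - m := sub_pos.mpr ((le_rPlus m a q).trans_lt hr)
  have hd : 0 ≤ m ^ 2 - a ^ 2 - q ^ 2 := by linarith
  rw [(hasDerivAt_photonQuotient hΔ).deriv]
  positivity

lemma tendsto_sqrt_Delta_nhdsGT_rPlus (h : a ^ 2 + q ^ 2 ≤ m ^ 2) :
    Tendsto (fun r ↦ √(Delta m a q r)) (𝓝[>] rPlus m a q) (𝓝[>] 0) := by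
  refine tendsto_nhdsWithin_iff.mpr ⟨?_, ?_⟩
  · have hcont := (hasDerivAt_Delta m a q (rPlus m a q)).continuousAt.sqrt
    simpa [Delta_rPlus h] using hcont.tendsto.mono_left nhdsWithin_le_nhds
  · filter_upwards [self_mem_nhdsWithin] with r hr
    exact Real.sqrt_pos.mpr (Delta_pos hr)

lemma photonQuotient_numerator_rPlus_neg (hm : 0 ≤ m) (h : a ^ 2 + q ^ 2 < m ^ 2) :
    rPlus m a q ^ 2 - 3 * m * rPlus m a q + 2 * a ^ 2 + 2 * q ^ 2 < 0 := by
  have hd : 0 < √(m ^ 2 - a ^ 2 - q ^ 2) := Real.sqrt_pos.mpr (by linarith)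
  have hd_sq : √(m ^ 2 - a ^ 2 - q ^ 2) ^ 2 = m ^ 2 - a ^ 2 - q ^ 2 := Real.sq_sqrt (by linarith)
  calc rPlus m a q ^ 2 - 3 * m * rPlus m a q + 2 * a ^ 2 + 2 * q ^ 2
      = -(√(m ^ 2 - a ^ 2 - q ^ 2) * (√(m ^ 2 - a ^ 2 - q ^ 2) + m)) := by
        unfold rPlus
        linear_combination 2 * hd_sq
    _ < 0 := neg_neg_of_pos (by positivity)

lemma tendsto_photonQuotient_nhdsGT_rPlus (hm : 0 ≤ m) (h : a ^ 2 + q ^ 2 < m ^ 2) :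
    Tendsto (photonQuotient m a q) (𝓝[>] rPlus m a q) atBot := by
  have hnum : Continuous fun r : ℝ ↦ r ^ 2 - 3 * m * r + 2 * a ^ 2 + 2 * q ^ 2 := by fun_prop
  have hinv : Tendsto (fun r ↦ (√(Delta m a q r))⁻¹) (𝓝[>] rPlus m a q) atTop :=
    tendsto_inv_nhdsGT_zero.comp (tendsto_sqrt_Delta_nhdsGT_rPlus h.le)
  exact ((hnum.tendsto _).mono_left nhdsWithin_le_nhds).neg_mul_atTop
    (photonQuotient_numerator_rPlus_neg hm h) hinv

lemma sub_three_mul_le_photonQuotient (hm : 0 ≤ m) (h : a ^ 2 + q ^ 2 ≤ m ^ 2)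
    (hr : rPlus m a q < r) (hr3 : 3 * m ≤ r) : r - 3 * m ≤ photonQuotient m a q r := by
  rw [photonQuotient, le_div_iff₀ (Real.sqrt_pos.mpr (Delta_pos hr))]
  calc (r - 3 * m) * √(Delta m a q r)
      ≤ (r - 3 * m) * (r - m) :=
        mul_le_mul_of_nonneg_left (sqrt_Delta_le_sub h ((le_rPlus m a q).trans hr.le))
          (sub_nonneg.mpr hr3)
    _ ≤ r ^ 2 - 3 * m * r + 2 * a ^ 2 + 2 * q ^ 2 := by
        linarith [mul_nonneg hm (sub_nonneg.mpr hr3), sq_nonneg a, sq_nonneg q]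

lemma tendsto_photonQuotient_atTop (hm : 0 ≤ m) (h : a ^ 2 + q ^ 2 ≤ m ^ 2) :
    Tendsto (photonQuotient m a q) atTop atTop := by
  refine tendsto_atTop_mono' atTop ?_ (tendsto_atTop_add_const_right atTop (-(3 * m)) tendsto_id)
  filter_upwards [eventually_gt_atTop (rPlus m a q), eventually_ge_atTop (3 * m)] with r hr hr3
  exact sub_three_mul_le_photonQuotient hm h hr hr3

lemma bijOn_photonQuotient (hm : 0 ≤ m) (h : a ^ 2 + q ^ 2 < m ^ 2) :
    BijOn (photonQuotient m a q) (Ioi (rPlus m a q)) univ := by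
  refine ⟨mapsTo_univ _ _, (strictMonoOn_photonQuotient hm h.le).injOn, ?_⟩
  exact (continuousOn_photonQuotient m a q).surjOn_of_tendsto nonempty_Ioi
    ((tendsto_comp_coe_Ioi_atBot).mpr (tendsto_photonQuotient_nhdsGT_rPlus hm h))
    (tendsto_comp_val_Ioi_atTop.mpr (tendsto_photonQuotient_atTop hm h.le))

end

theorem photon_circle_exists_unique_general (m a q : ℝ) (hm : 0 ≤ m)
    (hmaq : a ^ 2 + q ^ 2 < m ^ 2) (c : ℝ) :
    ∃! r : ℝ, rPlus m a q < r ∧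
      r ^ 2 - 3 * m * r + 2 * a ^ 2 + 2 * q ^ 2 + c * √(Delta m a q r) = 0 := by
  have hbij := bijOn_photonQuotient hm hmaq
  obtain ⟨r, hr, hrc⟩ := hbij.surjOn (Set.mem_univ (-c))
  refine ⟨r, ⟨hr, (photonQuotient_eq_neg_iff (Delta_pos hr) c).mp hrc⟩, ?_⟩
  rintro s ⟨hs, hsc⟩
  exact hbij.injOn hs hr (((photonQuotient_eq_neg_iff (Delta_pos hs) c).mpr hsc).trans hrc.symm)

theorem photon_circle_exists_unique (m a q : ℝ) (hm : 0 < m) (ha : 0 ≤ a)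
    (h0 : 0 < a ^ 2 + q ^ 2) (hmaq : a ^ 2 + q ^ 2 < m ^ 2)
    (ε : ℝ) (hε : ε = 1 ∨ ε = -1) :
    ∃! r : ℝ, rPlus m a q < r ∧
      r ^ 2 - 3 * m * r + 2 * a ^ 2 + 2 * q ^ 2
        + 2 * ε * a * Real.sqrt (r ^ 2 - 2 * m * r + a ^ 2 + q ^ 2) = 0 :=
  photon_circle_exists_unique_general m a q hm.le hmaq (2 * ε * a)
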